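/- For f ∈ L¹(V_{n,m}) and Re λ > m - k - 1 (with 1 ≤ m ≤ k ≤ n-1), the integral (𝒞^λ_{m,k} f)(u) = ∫_{V_{n,m}} f(v) |det(u^t v v^t u)|^{λ/2} dv converges for almost all u ∈ V_{n,k}. -/

import Mathlib

open Matrix MeasureTheory

/-- Borel/product measurable structure on real matrices (via `Matrix = Fin n → Fin m → ℝ`). -/
instance matrixMeasurableSpace (n m : ℕ) : MeasurableSpace (Matrix (Fin n) (Fin m) ℝ) :=
  inferInstanceAs (MeasurableSpace (Fin n → Fin m → ℝ))

/-!
By Fubini, it is enough to bound `h v = ∫ |uᵀv|_m ^ r dμ(u)`, `r = Re λ`, over `V_{n,m}`. Extend `h`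
to all `n × m` matrices and average it over a matrix `X` whose columns are independent standard
Gaussian vectors. If `u` has orthonormal columns, then `uᵀX` is a `k × m` Gaussian matrix, so the
average is `I(k,m) · μ(V_{n,k})`, where `I(d,m)` is the `r`-th moment of the volume spanned by `m`
Gaussian vectors of `ℝᵈ`. On the other hand, `X = gvB` with `g` orthogonal, and invariance of `μ`
gives `h X = det (XᵀX) ^ (r/2) · h v`, so the average is at least `I(n,m) · h v`.

Projecting the last `m` of `m + 1` Gaussian vectors of `ℝᵈ⁺¹` onto the orthogonal complement of the
first gives `I(d+1,m+1) = 𝔼‖x‖ʳ · I(d,m)`. In the recursion starting from `I(k,m)`, the worst factor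
is `𝔼‖x‖ʳ` in dimension `k - m + 1`, which is finite exactly when `r > m - k - 1`.
-/

open ProbabilityTheory Module
open scoped ENNReal RealInnerProductSpace

section Gaussian

lemma pi_le_pi_of_forall_le {ι : Type*} [Fintype ι] {α : ι → Type*}
    [∀ i, MeasurableSpace (α i)] {μ ν : ∀ i, Measure (α i)} [∀ i, SigmaFinite (μ i)]
    (h : ∀ i, μ i ≤ ν i) : Measure.pi μ ≤ Measure.pi ν := by
  have hle : (Measure.pi μ).toOuterMeasure ≤ OuterMeasure.pi fun i => (ν i).toOuterMeasure :=
    OuterMeasure.le_pi.2 fun s _ => by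
      simpa only [Measure.coe_toOuterMeasure, Measure.pi_pi] using
        Finset.prod_le_prod' fun i _ => h i (s i)
  refine Measure.le_iff.2 fun s hs => ?_
  rw [Measure.pi_def ν, toMeasure_apply _ _ hs]
  exact hle s

lemma gaussianReal_zero_one_le_volume : gaussianReal 0 1 ≤ volume := by
  have hpdf : gaussianPDF 0 1 ≤ 1 := fun x => by
    rw [gaussianPDF, Pi.one_apply, ENNReal.ofReal_le_one, gaussianPDFReal]
    have hsqrt : 1 ≤ √(2 * Real.pi * (1 : NNReal)) := by
      rw [Real.one_le_sqrt, NNReal.coe_one]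
      linarith [Real.pi_gt_three]
    exact mul_le_one₀ (inv_le_one_of_one_le₀ hsqrt) (Real.exp_nonneg _)
      (Real.exp_le_one_iff.2 (div_nonpos_of_nonpos_of_nonneg (by simp [sq_nonneg]) (by simp)))
  calc gaussianReal 0 1 = volume.withDensity (gaussianPDF 0 1) :=
        gaussianReal_of_var_ne_zero 0 one_ne_zero
    _ ≤ volume.withDensity 1 := withDensity_mono (ae_of_all _ hpdf)
    _ = volume := withDensity_one

variable {E F : Type*} [NormedAddCommGroup E] [InnerProductSpace ℝ E] [FiniteDimensional ℝ E]
  [MeasurableSpace E] [BorelSpace E] [NormedAddCommGroup F] [InnerProductSpace ℝ F]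
  [FiniteDimensional ℝ F] [MeasurableSpace F] [BorelSpace F]

lemma stdGaussian_le_volume : stdGaussian E ≤ volume := by
  have hpi : Measure.pi (fun _ : Fin (finrank ℝ E) => gaussianReal 0 1) ≤ volume :=
    pi_le_pi_of_forall_le fun _ => gaussianReal_zero_one_le_volume
  let b := stdOrthonormalBasis ℝ E
  calc stdGaussian E
      = ((Measure.pi fun _ => gaussianReal 0 1).map (WithLp.toLp 2)).map b.repr.symm := by
        rw [map_pi_eq_stdGaussian, stdGaussian_map]
    _ ≤ (volume.map (WithLp.toLp 2)).map b.repr.symm :=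
        Measure.map_mono (Measure.map_mono hpi (by fun_prop)) (by fun_prop)
    _ = volume := by
        rw [(PiLp.volume_preserving_toLp _).map_eq, b.measurePreserving_repr_symm.map_eq]

lemma integrableOn_ball_norm_rpow [Nontrivial E] {r R : ℝ} (hr : -(finrank ℝ E : ℝ) < r)
    (hR : 0 < R) : IntegrableOn (fun x : E => ‖x‖ ^ r) (Metric.ball 0 R) := by
  rw [integrableOn_fun_norm_addHaar volume (f := fun t => t ^ r)]
  have hpow : IntegrableOn (fun t : ℝ => t ^ (((finrank ℝ E - 1 : ℕ) : ℝ) + r)) (Set.Ioo 0 R) := by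
    rw [intervalIntegral.integrableOn_Ioo_rpow_iff hR, Nat.cast_pred finrank_pos]
    linarith
  refine hpow.congr_fun (fun t ht => ?_) measurableSet_Ioo
  simp only [Real.rpow_add ht.1, Real.rpow_natCast, smul_eq_mul]

lemma lintegral_norm_rpow_stdGaussian_lt_top {r : ℝ} (hr : -(finrank ℝ E : ℝ) < r) :
    ∫⁻ x, ENNReal.ofReal (‖x‖ ^ r) ∂stdGaussian E < ∞ := by
  rcases le_or_gt 0 r with hr₀ | hr₀
  · have hint := (IsGaussian.memLp_id (stdGaussian E) (ENNReal.ofReal r)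
      ENNReal.ofReal_ne_top).integrable_norm_rpow'
    rw [ENNReal.toReal_ofReal hr₀] at hint
    exact hint.lintegral_lt_top
  have : Nontrivial E := nontrivial_of_finrank_pos (R := ℝ) (by
    rw [← Nat.cast_pos (α := ℝ)]; linarith)
  have hball : ∫⁻ x in Metric.ball 0 1, ENNReal.ofReal (‖x‖ ^ r) ∂stdGaussian E < ∞ :=
    (lintegral_mono' (Measure.restrict_mono_measure stdGaussian_le_volume _) le_rfl).trans_lt
      (integrableOn_ball_norm_rpow hr one_pos).lintegral_lt_top
  have hcompl : ∫⁻ x in (Metric.ball 0 1)ᶜ, ENNReal.ofReal (‖x‖ ^ r) ∂stdGaussian E < ∞ := by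
    refine (setLIntegral_mono measurable_const fun x hx => ?_).trans_lt
      (setLIntegral_lt_top_of_le_nnreal (measure_ne_top _ _) ⟨1, fun _ _ => le_rfl⟩)
    have hx : 1 ≤ ‖x‖ := by simpa using hx
    simpa using Real.rpow_le_one_of_one_le_of_nonpos hx hr₀.le
  rw [← lintegral_add_compl _ Metric.isOpen_ball.measurableSet]
  exact ENNReal.add_lt_top.2 ⟨hball, hcompl⟩

instance [Nontrivial E] : NullSingletonClass (stdGaussian E) := by
  refine IsGaussian.nullSingletonClass fun x hx => ?_
  obtain ⟨t, ht⟩ := exists_ne (0 : E)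
  have hnorm : ‖charFun (stdGaussian E) t‖ = 1 := by
    rw [hx, charFun_dirac, Complex.norm_exp_ofReal_mul_I]
  rw [charFun_stdGaussian, Complex.norm_exp, Real.exp_eq_one_iff] at hnorm
  have : -(‖t‖ ^ 2) / 2 = 0 := by exact_mod_cast hnorm
  have := norm_pos_iff.2 ht
  nlinarith

lemma lintegral_norm_rpow_stdGaussian_ne_zero [Nontrivial E] (r : ℝ) :
    ∫⁻ x, ENNReal.ofReal (‖x‖ ^ r) ∂stdGaussian E ≠ 0 := by
  intro h
  rw [lintegral_eq_zero_iff (by fun_prop)] at h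
  obtain ⟨x, hx, hx₀⟩ := (h.and (Measure.ae_ne (stdGaussian E) 0)).exists
  exact (Real.rpow_pos_of_pos (norm_pos_iff.2 hx₀) r).not_ge (ENNReal.ofReal_eq_zero.1 hx)

lemma measurePreserving_stdGaussian {L : E →L[ℝ] F} (hL : ∀ y, ‖L.adjoint y‖ = ‖y‖) :
    MeasurePreserving L (stdGaussian E) (stdGaussian F) where
  measurable := by fun_prop
  map_eq := by
    refine Measure.ext_of_charFun (funext fun y => ?_)
    rw [charFun_apply, integral_map (by fun_prop) (by fun_prop)]
    simp_rw [← ContinuousLinearMap.adjoint_inner_right]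
    rw [← charFun_apply, charFun_stdGaussian, charFun_stdGaussian, hL]

end Gaussian


section GramDeterminant

variable {E : Type*} [NormedAddCommGroup E] [InnerProductSpace ℝ E]

lemma det_gram_nonneg {ι : Type*} [Fintype ι] [DecidableEq ι] (x : ι → E) :
    0 ≤ (gram ℝ x).det :=
  (posSemidef_gram ℝ x).det_nonneg

lemma continuous_det_gram {ι : Type*} [Fintype ι] [DecidableEq ι] :
    Continuous fun x : ι → E => (gram ℝ x).det :=
  Continuous.matrix_det <| continuous_matrix fun i j => by
    simp only [gram_apply]
    fun_prop

/- Subtracting from each `y i` its component along `x` is a row operation. -/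
lemma det_gram_cons {m : ℕ} (x : E) (y : Fin m → E) :
    (gram ℝ (Fin.cons x y : Fin (m + 1) → E)).det =
      ‖x‖ ^ 2 * (gram ℝ fun i => (ℝ ∙ x)ᗮ.orthogonalProjectionOnto (y i)).det := by
  let P := (ℝ ∙ x)ᗮ.orthogonalProjectionOnto
  let w : Fin (m + 1) → E := Fin.cons x y
  let z : Fin (m + 1) → E := Fin.cons x fun i => P (y i)
  let c : Fin (m + 1) → ℝ := Fin.cons 0 fun i => ⟪x, y i⟫ / ‖x‖ ^ 2
  let B : Matrix (Fin (m + 1)) (Fin (m + 1)) ℝ := of fun i j => ⟪z i, w j⟫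
  have hw : ∀ i, w i = z i + c i • x := Fin.cases (by simp [w, z, c]) fun i => by
    simp [w, z, c, P, Submodule.starProjection_orthogonal_val, Submodule.starProjection_singleton]
  have hdet : (gram ℝ w).det = B.det :=
    det_eq_of_forall_row_eq_smul_add_const c 0 rfl fun i j => by
      rw [gram_apply, hw i, inner_add_left, real_inner_smul_left]
      rfl
  have hPx : ∀ v : (ℝ ∙ x)ᗮ, ⟪(v : E), x⟫ = 0 := fun v =>
    Submodule.mem_orthogonal_singleton_iff_inner_left.1 v.2
  have hcol : ∀ i : Fin m, B i.succ 0 = 0 := fun i => hPx _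
  have hminor : B.submatrix Fin.succ Fin.succ = gram ℝ fun i => P (y i) := by
    ext i j
    exact (Submodule.inner_orthogonalProjectionOnto_eq_of_mem_left (P (y i)) (y j)).symm
  have hcorner : B 0 0 = ‖x‖ ^ 2 := real_inner_self_eq_norm_sq x
  rw [hdet, det_succ_column_zero, Fin.sum_univ_succ]
  simp [hcol, hminor, hcorner, P]

end GramDeterminant

section GramMoment

lemma lintegral_pi_fin_succ {α : Type*} [MeasurableSpace α] (μ : Measure α) [SigmaFinite μ]
    {m : ℕ} {f : (Fin (m + 1) → α) → ℝ≥0∞} (hf : Measurable f) :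
    ∫⁻ x, f x ∂Measure.pi (fun _ => μ) =
      ∫⁻ x, ∫⁻ y : Fin m → α, f (Fin.cons x y) ∂Measure.pi (fun _ => μ) ∂μ := by
  have hsplit := (measurePreserving_piFinSuccAbove (fun _ : Fin (m + 1) => μ) 0).symm
  rw [← hsplit.lintegral_comp hf]
  refine (lintegral_prod _ (hf.comp hsplit.measurable).aemeasurable).trans ?_
  simp [MeasurableEquiv.piFinSuccAbove_symm_apply, Fin.insertNthEquiv]

variable {E : Type*} [NormedAddCommGroup E] [InnerProductSpace ℝ E] [FiniteDimensional ℝ E]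
  [MeasurableSpace E] [BorelSpace E]

lemma measurable_ofReal_det_gram_rpow (ι : Type*) [Fintype ι] [DecidableEq ι] (s : ℝ) :
    Measurable fun x : ι → E => ENNReal.ofReal ((gram ℝ x).det ^ s) :=
  (continuous_det_gram.measurable.pow_const s).ennreal_ofReal

/-- The moment `𝔼 (vol (x₁, …, xₘ)) ^ r` of the volume of the parallelepiped spanned by `m`
independent standard Gaussian vectors of `ℝᵈ`, where `vol ^ 2` is their Gram determinant. -/
noncomputable def gramMoment (d m : ℕ) (r : ℝ) : ℝ≥0∞ :=
  ∫⁻ x : Fin m → EuclideanSpace ℝ (Fin d), ENNReal.ofReal ((gram ℝ x).det ^ (r / 2))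
    ∂Measure.pi fun _ => stdGaussian _

lemma lintegral_det_gram_comp_stdGaussian {d : ℕ} (m : ℕ) (r : ℝ)
    {L : E →L[ℝ] EuclideanSpace ℝ (Fin d)} (hL : ∀ y, ‖L.adjoint y‖ = ‖y‖) :
    ∫⁻ x : Fin m → E, ENNReal.ofReal ((gram ℝ fun i => L (x i)).det ^ (r / 2))
      ∂Measure.pi (fun _ => stdGaussian E) = gramMoment d m r :=
  (measurePreserving_pi _ _ fun _ => measurePreserving_stdGaussian hL).lintegral_comp
    (measurable_ofReal_det_gram_rpow (Fin m) (r / 2))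

lemma lintegral_det_gram_orthogonalProjectionOnto_stdGaussian {d : ℕ} (m : ℕ) (r : ℝ)
    {K : Submodule ℝ E} (hK : finrank ℝ K = d) :
    ∫⁻ x : Fin m → E,
      ENNReal.ofReal ((gram ℝ fun i => K.orthogonalProjectionOnto (x i)).det ^ (r / 2))
      ∂Measure.pi (fun _ => stdGaussian E) = gramMoment d m r := by
  let φ := ((stdOrthonormalBasis ℝ K).reindex (finCongr hK)).repr
  let L := φ.toContinuousLinearEquiv.toContinuousLinearMap ∘L K.orthogonalProjectionOnto
  have hL : ∀ y, ‖L.adjoint y‖ = ‖y‖ := fun y => by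
    rw [ContinuousLinearMap.adjoint_comp, Submodule.adjoint_orthogonalProjectionOnto,
      LinearIsometryEquiv.adjoint_eq_symm]
    exact φ.symm.norm_map y
  have hgram : ∀ x : Fin m → E,
      gram ℝ (fun i => K.orthogonalProjectionOnto (x i)) = gram ℝ fun i => L (x i) := fun x => by
    ext i j
    exact (φ.inner_map_map _ _).symm
  simp_rw [hgram]
  exact lintegral_det_gram_comp_stdGaussian m r hL

lemma gramMoment_zero_right (d : ℕ) (r : ℝ) : gramMoment d 0 r = 1 := by
  simp [gramMoment]

lemma gramMoment_zero_succ (m : ℕ) {r : ℝ} (hr : r ≠ 0) : gramMoment 0 (m + 1) r = 0 := by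
  have hgram : ∀ x : Fin (m + 1) → EuclideanSpace ℝ (Fin 0), gram ℝ x = 0 := fun x => by
    rw [Subsingleton.elim x 0, gram_zero]
  simp [gramMoment, hgram, det_zero, Real.zero_rpow (div_ne_zero hr two_ne_zero)]

lemma gramMoment_succ_succ (d m : ℕ) (r : ℝ) :
    gramMoment (d + 1) (m + 1) r =
      (∫⁻ x, ENNReal.ofReal (‖x‖ ^ r) ∂stdGaussian (EuclideanSpace ℝ (Fin (d + 1)))) *
        gramMoment d m r := by
  let γ := stdGaussian (EuclideanSpace ℝ (Fin (d + 1)))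
  have : Fact (finrank ℝ (EuclideanSpace ℝ (Fin (d + 1))) = d + 1) := ⟨finrank_euclideanSpace_fin⟩
  rw [gramMoment, lintegral_pi_fin_succ γ (measurable_ofReal_det_gram_rpow _ _),
    ← lintegral_mul_const _ (by fun_prop)]
  refine lintegral_congr_ae ?_
  filter_upwards [Measure.ae_ne γ 0] with x hx
  rw [← lintegral_det_gram_orthogonalProjectionOnto_stdGaussian m r
      (Submodule.finrank_orthogonal_span_singleton hx),
    ← lintegral_const_mul' _ _ ENNReal.ofReal_ne_top]
  refine lintegral_congr fun y => ?_
  rw [det_gram_cons, Real.mul_rpow (by positivity) (det_gram_nonneg _),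
    ENNReal.ofReal_mul (by positivity), ← Real.rpow_natCast_mul (norm_nonneg x)]
  congr 4
  push_cast
  ring

lemma gramMoment_lt_top {d m : ℕ} {r : ℝ} (hr : (m : ℝ) - d - 1 < r) :
    gramMoment d m r < ∞ := by
  induction m generalizing d with
  | zero => simp [gramMoment_zero_right]
  | succ m ih =>
    push_cast at hr
    cases d with
    | zero =>
      have hr₀ : 0 < r := by
        push_cast at hr
        linarith [(m.cast_nonneg : (0 : ℝ) ≤ m)]
      simp [gramMoment_zero_succ m hr₀.ne']
    | succ d =>
      push_cast at hr
      rw [gramMoment_succ_succ]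
      refine ENNReal.mul_lt_top (lintegral_norm_rpow_stdGaussian_lt_top ?_) (ih (by linarith))
      rw [finrank_euclideanSpace_fin]
      push_cast
      linarith [(m.cast_nonneg : (0 : ℝ) ≤ m)]

lemma gramMoment_ne_zero {d m : ℕ} (h : m ≤ d) (r : ℝ) : gramMoment d m r ≠ 0 := by
  induction m generalizing d with
  | zero => simp [gramMoment_zero_right]
  | succ m ih =>
    obtain ⟨d, rfl⟩ := Nat.exists_eq_add_one.2 (Nat.zero_lt_of_lt h)
    rw [gramMoment_succ_succ]
    exact mul_ne_zero (lintegral_norm_rpow_stdGaussian_ne_zero r) (ih (Nat.le_of_succ_le_succ h))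

end GramMoment


section OrthonormalColumns

variable {ι κ : Type*} [Fintype ι] [DecidableEq κ]

lemma transpose_mul_self_eq_one_iff_norm_map [Fintype κ] {A : Matrix ι κ ℝ} :
    Aᵀ * A = 1 ↔ ∀ x, ‖A.toEuclideanLin x‖ = ‖x‖ := by
  classical
  have hmul : (Aᵀ * A).toEuclideanLin = A.toEuclideanLin.adjoint ∘ₗ A.toEuclideanLin := by
    rw [toLpLin_mul 2 2 2, ← conjTranspose_eq_transpose_of_trivial,
      toEuclideanLin_conjTranspose_eq_adjoint]
  have hone : (1 : Matrix κ κ ℝ).toEuclideanLin = LinearMap.id := by simp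
  rw [← toEuclideanLin.injective.eq_iff, hmul, hone]
  exact (LinearMap.toContinuousLinearMap.injective.eq_iff.symm).trans
    (ContinuousLinearMap.norm_map_iff_adjoint_comp_self A.toEuclideanLin.toContinuousLinearMap).symm

lemma exists_linearIsometry_comp_eq {E F : Type*} [NormedAddCommGroup E] [InnerProductSpace ℝ E]
    [NormedAddCommGroup F] [InnerProductSpace ℝ F] [FiniteDimensional ℝ F] (f g : E →ₗᵢ[ℝ] F) :
    ∃ φ : F →ₗᵢ[ℝ] F, φ.comp f = g := by
  refine ⟨(g.comp f.equivRange.symm.toLinearIsometry).extend, LinearIsometry.ext fun x => ?_⟩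
  simpa using (g.comp f.equivRange.symm.toLinearIsometry).extend_apply (f.equivRange x)

lemma exists_orthogonal_mul_eq [DecidableEq ι] [Finite κ] {v w : Matrix ι κ ℝ}
    (hv : vᵀ * v = 1) (hw : wᵀ * w = 1) : ∃ g : Matrix ι ι ℝ, gᵀ * g = 1 ∧ g * v = w := by
  have := Fintype.ofFinite κ
  rw [transpose_mul_self_eq_one_iff_norm_map] at hv hw
  obtain ⟨φ, hφ⟩ := exists_linearIsometry_comp_eq ⟨v.toEuclideanLin, hv⟩ ⟨w.toEuclideanLin, hw⟩
  obtain ⟨g, hg⟩ := toEuclideanLin.surjective φ.toLinearMap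
  refine ⟨g, transpose_mul_self_eq_one_iff_norm_map.2 fun x => ?_, toEuclideanLin.injective ?_⟩
  · rw [hg]
    exact φ.norm_map x
  · rw [toLpLin_mul 2 2 2, hg]
    exact congrArg LinearIsometry.toLinearMap hφ

lemma card_le_card_of_transpose_mul_self_eq_one [Fintype κ] {A : Matrix ι κ ℝ}
    (hA : Aᵀ * A = 1) : Fintype.card κ ≤ Fintype.card ι := by
  rw [← rank_one (R := ℝ) (n := κ), ← hA, rank_transpose_mul_self]
  exact A.rank_le_card_height

open scoped MatrixOrder in
lemma exists_orthonormal_mul_eq_of_det_ne_zero [Fintype κ] {X : Matrix ι κ ℝ}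
    (hX : (Xᵀ * X).det ≠ 0) :
    ∃ (v : Matrix ι κ ℝ) (B : Matrix κ κ ℝ), vᵀ * v = 1 ∧ v * B = X := by
  obtain ⟨B, hB⟩ := CStarAlgebra.nonneg_iff_eq_star_mul_self.mp
    (posSemidef_conjTranspose_mul_self X).nonneg
  simp only [star_eq_conjTranspose, conjTranspose_eq_transpose_of_trivial] at hB
  have hdet : IsUnit B.det := isUnit_iff_ne_zero.2 fun h => hX (by simp [hB, h])
  refine ⟨X * B⁻¹, B, ?_, nonsing_inv_mul_cancel_right _ _ hdet⟩
  rw [transpose_mul, Matrix.mul_assoc, ← Matrix.mul_assoc Xᵀ, hB, ← Matrix.mul_assoc,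
    ← Matrix.mul_assoc, ← transpose_mul, mul_nonsing_inv _ hdet, transpose_one, Matrix.one_mul,
    mul_nonsing_inv _ hdet]

end OrthonormalColumns

section Columns

/-- The matrix with prescribed columns, which identifies families of `m` vectors of `ℝⁿ` with
`n × m` matrices. -/
def columnMatrix {ι κ : Type*} (x : κ → EuclideanSpace ℝ ι) : Matrix ι κ ℝ :=
  of fun a i => x i a

variable {ι κ τ : Type*} [Fintype ι]

lemma transpose_columnMatrix_mul_self (x : κ → EuclideanSpace ℝ ι) :
    (columnMatrix x)ᵀ * columnMatrix x = gram ℝ x := by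
  ext i j
  simp [columnMatrix, mul_apply, PiLp.inner_apply, mul_comm]

lemma mul_columnMatrix [DecidableEq ι] (A : Matrix τ ι ℝ) (x : κ → EuclideanSpace ℝ ι) :
    A * columnMatrix x = columnMatrix fun i => A.toEuclideanLin (x i) := by
  ext a i
  simp [columnMatrix, mul_apply, mulVec, dotProduct]

lemma transpose_columnMatrix_mul_mul [DecidableEq ι] [Fintype τ] (u : Matrix ι τ ℝ)
    (x : κ → EuclideanSpace ℝ ι) :
    (columnMatrix x)ᵀ * u * uᵀ * columnMatrix x = gram ℝ fun i => uᵀ.toEuclideanLin (x i) := by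
  rw [← transpose_columnMatrix_mul_self, ← mul_columnMatrix, transpose_mul, transpose_transpose,
    Matrix.mul_assoc _ uᵀ]

end Columns


section CosineMoment

variable {n m k : ℕ}

instance : BorelSpace (Matrix (Fin n) (Fin m) ℝ) :=
  inferInstanceAs (BorelSpace (Fin n → Fin m → ℝ))

instance : SecondCountableTopology (Matrix (Fin n) (Fin m) ℝ) :=
  inferInstanceAs (SecondCountableTopology (Fin n → Fin m → ℝ))

lemma continuous_columnMatrix :
    Continuous (columnMatrix : (Fin m → EuclideanSpace ℝ (Fin n)) → Matrix (Fin n) (Fin m) ℝ) :=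
  continuous_matrix fun a i => by
    simp only [columnMatrix, of_apply]
    fun_prop

lemma measurable_det_transpose_mul_mul_transpose_mul {α : Type*} [MeasurableSpace α]
    {u : α → Matrix (Fin n) (Fin k) ℝ} {v : α → Matrix (Fin n) (Fin m) ℝ} (hu : Measurable u)
    (hv : Measurable v) : Measurable fun a => ((v a)ᵀ * u a * (u a)ᵀ * v a).det := by
  have hcont : Continuous fun p : Matrix (Fin n) (Fin k) ℝ × Matrix (Fin n) (Fin m) ℝ =>
      (p.2ᵀ * p.1 * p.1ᵀ * p.2).det := by
    fun_prop
  exact (hcont.measurable.comp (hu.prodMk hv) :)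

lemma det_transpose_mul_mul_transpose_mul_nonneg {ι κ τ : Type*} [Fintype ι] [Fintype κ]
    [DecidableEq κ] [Fintype τ] (u : Matrix ι τ ℝ) (v : Matrix ι κ ℝ) :
    0 ≤ (vᵀ * u * uᵀ * v).det := by
  have hgram : vᵀ * u * uᵀ * v = (uᵀ * v)ᵀ * (uᵀ * v) := by
    simp only [transpose_mul, transpose_transpose, Matrix.mul_assoc]
  rw [hgram]
  exact (posSemidef_conjTranspose_mul_self _).det_nonneg

/-- The Stiefel manifold `V_{n,m}` of `n × m` matrices with orthonormal columns. -/
abbrev Stiefel (n m : ℕ) : Type :=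
  {v : Matrix (Fin n) (Fin m) ℝ // vᵀ * v = 1}

/-- The action on `V_{n,m}` of an orthogonal matrix `g` by left multiplication. -/
def Stiefel.rotate (g : Matrix (Fin n) (Fin n) ℝ) (hg : gᵀ * g = 1) (v : Stiefel n m) :
    Stiefel n m :=
  ⟨g * v.1, by
    rw [transpose_mul, Matrix.mul_assoc, ← Matrix.mul_assoc gᵀ, hg, Matrix.one_mul, v.2]⟩

lemma Stiefel.continuous_rotate (g : Matrix (Fin n) (Fin n) ℝ) (hg : gᵀ * g = 1) :
    Continuous (rotate g hg : Stiefel n m → Stiefel n m) :=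
  Continuous.subtype_mk (by fun_prop) _

/-- The integral `∫ |uᵀv|_m ^ r dμ(u)` over `V_{n,k}`, where `|uᵀv|_m ^ 2 = det (vᵀ u uᵀ v)`. The
argument `v` is an arbitrary matrix, since it gets averaged over Gaussian matrices. -/
noncomputable def cosineMoment (μ : Measure (Stiefel n k)) (r : ℝ)
    (v : Matrix (Fin n) (Fin m) ℝ) : ℝ≥0∞ :=
  ∫⁻ u, ENNReal.ofReal ((vᵀ * u.1 * u.1ᵀ * v).det ^ (r / 2)) ∂μ

variable {μ : Measure (Stiefel n k)}

lemma cosineMoment_mul_right (r : ℝ) (v : Matrix (Fin n) (Fin m) ℝ) (B : Matrix (Fin m) (Fin m) ℝ) :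
    cosineMoment μ r (v * B) = ENNReal.ofReal ((B.det ^ 2) ^ (r / 2)) * cosineMoment μ r v := by
  rw [cosineMoment, cosineMoment, ← lintegral_const_mul' _ _ ENNReal.ofReal_ne_top]
  refine lintegral_congr fun u => ?_
  have hdet : ((v * B)ᵀ * u.1 * u.1ᵀ * (v * B)).det = B.det ^ 2 * (vᵀ * u.1 * u.1ᵀ * v).det := by
    have hassoc : (v * B)ᵀ * u.1 * u.1ᵀ * (v * B) = Bᵀ * (vᵀ * u.1 * u.1ᵀ * v) * B := by
      simp only [transpose_mul, Matrix.mul_assoc]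
    rw [hassoc, det_mul, det_mul, det_transpose]
    ring
  rw [hdet, Real.mul_rpow (sq_nonneg _) (det_transpose_mul_mul_transpose_mul_nonneg _ _),
    ENNReal.ofReal_mul (by positivity)]

lemma cosineMoment_orthogonal_mul
    (hμ : ∀ g (hg : gᵀ * g = 1), μ.map (Stiefel.rotate g hg) = μ) (r : ℝ)
    {g : Matrix (Fin n) (Fin n) ℝ} (hg : gᵀ * g = 1) (v : Matrix (Fin n) (Fin m) ℝ) :
    cosineMoment μ r (g * v) = cosineMoment μ r v := by
  have hmeas : Measurable fun u : Stiefel n k =>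
      ENNReal.ofReal (((g * v)ᵀ * u.1 * u.1ᵀ * (g * v)).det ^ (r / 2)) := by
    exact ((measurable_det_transpose_mul_mul_transpose_mul measurable_subtype_coe
      measurable_const).pow_const _).ennreal_ofReal
  conv_lhs =>
    rw [cosineMoment, ← hμ g hg, lintegral_map hmeas (Stiefel.continuous_rotate g hg).measurable]
  refine lintegral_congr fun u => ?_
  have hcancel : (g * v)ᵀ * (g * u.1) * (g * u.1)ᵀ * (g * v) = vᵀ * u.1 * u.1ᵀ * v :=
    calc (g * v)ᵀ * (g * u.1) * (g * u.1)ᵀ * (g * v)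
        = vᵀ * (gᵀ * g) * u.1 * u.1ᵀ * (gᵀ * g) * v := by
          simp only [transpose_mul, Matrix.mul_assoc]
      _ = vᵀ * u.1 * u.1ᵀ * v := by rw [hg, Matrix.mul_one, Matrix.mul_one]
  rw [Stiefel.rotate, hcancel]

lemma det_rpow_mul_cosineMoment_le
    (hμ : ∀ g (hg : gᵀ * g = 1), μ.map (Stiefel.rotate g hg) = μ) (r : ℝ)
    {v : Matrix (Fin n) (Fin m) ℝ} (hv : vᵀ * v = 1) (X : Matrix (Fin n) (Fin m) ℝ) :
    ENNReal.ofReal ((Xᵀ * X).det ^ (r / 2)) * cosineMoment μ r v ≤ cosineMoment μ r X := by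
  rcases eq_or_ne (Xᵀ * X).det 0 with hX | hX
  · rcases eq_or_ne r 0 with rfl | hr
    · simp [cosineMoment]
    · simp [hX, hr]
  · obtain ⟨w, B, hw, rfl⟩ := exists_orthonormal_mul_eq_of_det_ne_zero hX
    obtain ⟨g, hg, rfl⟩ := exists_orthogonal_mul_eq hv hw
    have hdet : ((g * v * B)ᵀ * (g * v * B)).det = B.det ^ 2 := by
      rw [transpose_mul, Matrix.mul_assoc, ← Matrix.mul_assoc _ (g * v), hw, Matrix.one_mul,
        det_mul, det_transpose, sq]
    rw [hdet, cosineMoment_mul_right, cosineMoment_orthogonal_mul hμ r hg]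

lemma lintegral_det_transpose_mul_columnMatrix (r : ℝ) (u : Stiefel n k) :
    ∫⁻ x : Fin m → EuclideanSpace ℝ (Fin n),
      ENNReal.ofReal (((columnMatrix x)ᵀ * u.1 * u.1ᵀ * columnMatrix x).det ^ (r / 2))
      ∂Measure.pi (fun _ => stdGaussian _) = gramMoment k m r := by
  simp_rw [transpose_columnMatrix_mul_mul]
  refine lintegral_det_gram_comp_stdGaussian m r
    (L := u.1ᵀ.toEuclideanLin.toContinuousLinearMap) fun y => ?_
  rw [← LinearMap.adjoint_toContinuousLinearMap, ← toEuclideanLin_conjTranspose_eq_adjoint,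
    conjTranspose_eq_transpose_of_trivial, transpose_transpose]
  exact transpose_mul_self_eq_one_iff_norm_map.1 u.2 y

lemma lintegral_cosineMoment_columnMatrix [SFinite μ] (r : ℝ) :
    ∫⁻ x : Fin m → EuclideanSpace ℝ (Fin n), cosineMoment μ r (columnMatrix x)
      ∂Measure.pi (fun _ => stdGaussian _) = gramMoment k m r * μ Set.univ := by
  have hmeas : Measurable (Function.uncurry
      fun (x : Fin m → EuclideanSpace ℝ (Fin n)) (u : Stiefel n k) => ENNReal.ofReal
        (((columnMatrix x)ᵀ * u.1 * u.1ᵀ * columnMatrix x).det ^ (r / 2))) := by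
    exact ((measurable_det_transpose_mul_mul_transpose_mul
      (measurable_subtype_coe.comp measurable_snd)
      (continuous_columnMatrix.measurable.comp measurable_fst)).pow_const _).ennreal_ofReal
  simp_rw [cosineMoment]
  rw [lintegral_lintegral_swap hmeas.aemeasurable]
  simp_rw [lintegral_det_transpose_mul_columnMatrix, lintegral_const]

lemma gramMoment_mul_cosineMoment_le [SFinite μ]
    (hμ : ∀ g (hg : gᵀ * g = 1), μ.map (Stiefel.rotate g hg) = μ) (r : ℝ)
    {v : Matrix (Fin n) (Fin m) ℝ} (hv : vᵀ * v = 1) :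
    gramMoment n m r * cosineMoment μ r v ≤ gramMoment k m r * μ Set.univ := by
  rw [← lintegral_cosineMoment_columnMatrix, gramMoment,
    ← lintegral_mul_const _ (measurable_ofReal_det_gram_rpow _ _)]
  refine lintegral_mono fun x => ?_
  rw [← transpose_columnMatrix_mul_self]
  exact det_rpow_mul_cosineMoment_le hμ r hv (columnMatrix x)

lemma exists_cosineMoment_le [IsFiniteMeasure μ]
    (hμ : ∀ g (hg : gᵀ * g = 1), μ.map (Stiefel.rotate g hg) = μ) {r : ℝ}
    (hr : (m : ℝ) - k - 1 < r) :
    ∃ C : ℝ≥0∞, C ≠ ∞ ∧ ∀ v : Stiefel n m, cosineMoment μ r v.1 ≤ C := by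
  rcases lt_or_ge n m with hnm | hmn
  · refine ⟨0, ENNReal.zero_ne_top, fun v => absurd hnm (not_lt.2 ?_)⟩
    simpa only [Fintype.card_fin] using card_le_card_of_transpose_mul_self_eq_one v.2
  · have hnum : gramMoment k m r * μ Set.univ ≠ ∞ :=
      ENNReal.mul_ne_top (gramMoment_lt_top hr).ne (measure_ne_top _ _)
    have hden : gramMoment n m r ≠ 0 := gramMoment_ne_zero hmn r
    refine ⟨_, ENNReal.div_ne_top hnum hden, fun v => ?_⟩
    rw [ENNReal.le_div_iff_mul_le (.inl hden) (.inr hnum), mul_comm]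
    exact gramMoment_mul_cosineMoment_le hμ r v.2

end CosineMoment

section Fubini

lemma ae_integrable_mul_of_lintegral_enorm_le {α β 𝕜 : Type*} [MeasurableSpace α]
    [MeasurableSpace β] [NormedRing 𝕜] [NormMulClass 𝕜] [MeasurableSpace 𝕜] [BorelSpace 𝕜]
    [SecondCountableTopology 𝕜] {μ : Measure α} {ν : Measure β} [SFinite μ]
    [SFinite ν] {f : β → 𝕜} (hf : Integrable f ν) {K : α → β → 𝕜}
    (hK : Measurable (Function.uncurry K)) {C : ℝ≥0∞} (hC : C ≠ ∞)
    (hKC : ∀ y, ∫⁻ x, ‖K x y‖ₑ ∂μ ≤ C) :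
    ∀ᵐ x ∂μ, Integrable (fun y => f y * K x y) ν := by
  have hmeas : AEMeasurable (Function.uncurry fun x y => ‖f y‖ₑ * ‖K x y‖ₑ) (μ.prod ν) :=
    (hf.1.enorm.comp_quasiMeasurePreserving Measure.quasiMeasurePreserving_snd).mul
      hK.enorm.aemeasurable
  have hfin : ∫⁻ x, ∫⁻ y, ‖f y‖ₑ * ‖K x y‖ₑ ∂ν ∂μ < ∞ :=
    calc ∫⁻ x, ∫⁻ y, ‖f y‖ₑ * ‖K x y‖ₑ ∂ν ∂μ
        = ∫⁻ y, ‖f y‖ₑ * ∫⁻ x, ‖K x y‖ₑ ∂μ ∂ν := by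
          rw [lintegral_lintegral_swap hmeas]
          simp_rw [lintegral_const_mul' _ _ enorm_ne_top]
      _ ≤ ∫⁻ y, ‖f y‖ₑ * C ∂ν := by
          gcongr
          exact hKC _
      _ = (∫⁻ y, ‖f y‖ₑ ∂ν) * C := lintegral_mul_const' _ _ hC
      _ < ∞ := ENNReal.mul_lt_top hf.2 hC.lt_top
  filter_upwards [ae_lt_top' hmeas.lintegral_prod_right' hfin.ne] with x hx
  refine ⟨hf.1.mul hK.of_uncurry_left.aestronglyMeasurable, ?_⟩
  rw [hasFiniteIntegral_iff_enorm]
  simpa only [enorm_mul, Function.uncurry_apply_pair] using hx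

end Fubini

section CosineTransform

lemma enorm_ofReal_cpow_le {x : ℝ} (hx : 0 ≤ x) (z : ℂ) :
    ‖(x : ℂ) ^ z‖ₑ ≤ ENNReal.ofReal (x ^ z.re) := by
  rw [← ofReal_norm]
  refine ENNReal.ofReal_le_ofReal ((Complex.norm_cpow_le _ _).trans_eq ?_)
  rw [Complex.arg_ofReal_of_nonneg hx, Complex.norm_of_nonneg hx, zero_mul, Real.exp_zero, div_one]

variable {n m k : ℕ}

lemma lintegral_enorm_det_cpow_le_cosineMoment (μ : Measure (Stiefel n k)) (lam : ℂ)
    (v : Matrix (Fin n) (Fin m) ℝ) :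
    ∫⁻ u, ‖((vᵀ * u.1 * u.1ᵀ * v).det : ℂ) ^ (lam / 2)‖ₑ ∂μ ≤ cosineMoment μ lam.re v := by
  refine lintegral_mono fun u => ?_
  simpa only [Complex.div_ofNat_re] using
    enorm_ofReal_cpow_le (det_transpose_mul_mul_transpose_mul_nonneg u.1 v) (lam / 2)

lemma measurable_det_cpow (z : ℂ) :
    Measurable (Function.uncurry fun (u : Stiefel n k) (v : Stiefel n m) =>
      ((v.1ᵀ * u.1 * u.1ᵀ * v.1).det : ℂ) ^ z) := by
  exact (Complex.measurable_ofReal.comp (measurable_det_transpose_mul_mul_transpose_mul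
    (measurable_subtype_coe.comp measurable_fst)
    (measurable_subtype_coe.comp measurable_snd))).pow_const z

theorem cosine_transform_ae_convergent_general {μ : Measure (Stiefel n k)} [IsFiniteMeasure μ]
    (hμ : ∀ g (hg : gᵀ * g = 1), μ.map (Stiefel.rotate g hg) = μ)
    {ν : Measure (Stiefel n m)} [SFinite ν] {f : Stiefel n m → ℂ} (hf : Integrable f ν)
    {lam : ℂ} (hlam : (m : ℝ) - k - 1 < lam.re) :
    ∀ᵐ u ∂μ, Integrable
      (fun v : Stiefel n m => f v * ((v.1ᵀ * u.1 * u.1ᵀ * v.1).det : ℂ) ^ (lam / 2)) ν := by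
  obtain ⟨C, hC, hle⟩ := exists_cosineMoment_le hμ hlam
  exact ae_integrable_mul_of_lintegral_enorm_le hf (measurable_det_cpow (lam / 2)) hC fun v =>
    (lintegral_enorm_det_cpow_le_cosineMoment μ lam v.1).trans (hle v)

end CosineTransform

/-- Convergence a.e. of the higher-rank cosine transform: if `f ∈ L¹(V_{n,m})` and
`Re λ > m - k - 1`, then `∫_{V_{n,m}} f(v) |uᵀv|_m^λ dv` converges (absolutely) for
almost all `u ∈ V_{n,k}`. The Stiefel manifolds are realized as subtypes of matrices,
with their `O(n)`-invariant probability measures. -/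
theorem cosine_transform_ae_convergent (n m k : ℕ) (h1 : 1 ≤ m) (h2 : m ≤ k)
    (h3 : k ≤ n - 1)
    (ν : Measure {v : Matrix (Fin n) (Fin m) ℝ // vᵀ * v = 1})
    (μ : Measure {u : Matrix (Fin n) (Fin k) ℝ // uᵀ * u = 1})
    [IsProbabilityMeasure ν] [IsProbabilityMeasure μ]
    (hν : ∀ g : Matrix (Fin n) (Fin n) ℝ, ∀ hg : gᵀ * g = 1,
      ν.map (fun v => (⟨g * v.1, by
        rw [Matrix.transpose_mul, Matrix.mul_assoc, ← Matrix.mul_assoc gᵀ, hg,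
          Matrix.one_mul, v.2]⟩ : {v : Matrix (Fin n) (Fin m) ℝ // vᵀ * v = 1})) = ν)
    (hμ : ∀ g : Matrix (Fin n) (Fin n) ℝ, ∀ hg : gᵀ * g = 1,
      μ.map (fun u => (⟨g * u.1, by
        rw [Matrix.transpose_mul, Matrix.mul_assoc, ← Matrix.mul_assoc gᵀ, hg,
          Matrix.one_mul, u.2]⟩ : {u : Matrix (Fin n) (Fin k) ℝ // uᵀ * u = 1})) = μ)
    (f : {v : Matrix (Fin n) (Fin m) ℝ // vᵀ * v = 1} → ℂ) (hf : Integrable f ν)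
    (lam : ℂ) (hlam : (m : ℝ) - k - 1 < lam.re) :
    ∀ᵐ u ∂μ, Integrable
      (fun v : {v : Matrix (Fin n) (Fin m) ℝ // vᵀ * v = 1} =>
        f v * (((v.1ᵀ * u.1 * u.1ᵀ * v.1).det : ℂ) ^ (lam / 2))) ν :=
  cosine_transform_ae_convergent_general hμ hf hlam
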